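/- arXiv:nlin/0308001 — 2 statements merged into one kernel-verified Lean document; each statement's English description precedes it below -/
import Mathlib

section
/- Let γ ≥ 0, v₀ > 0, V₀ > 0, and let s : [0,∞) → ℝ satisfy s(τ) − s(t) ≥ v₀(t−τ) and s(τ) − s(t) ≤ V₀(t−τ) for 0 ≤ τ ≤ t (front moving left). Fix t > 0 and x < s(t). Then |∫_0^t e^{−γ(t−τ)} · exp(−(x−s(τ))²/(4(t−τ)))/√(4π(t−τ)) · V₀ dτ| ≤ (V₀/√(v₀²+4γ)) · exp(−v₀|x−s(t)|/2 − |x−s(t)|²/(4t)). -/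
open Real MeasureTheory

theorem ahead_of_front_decay (γ v₀ V₀ : ℝ) (hγ : 0 ≤ γ) (hv₀ : 0 < v₀) (hV₀ : 0 < V₀)
    (s : ℝ → ℝ)
    (hs_lower : ∀ τ t : ℝ, 0 ≤ τ → τ ≤ t → v₀ * (t - τ) ≤ s τ - s t)
    (hs_upper : ∀ τ t : ℝ, 0 ≤ τ → τ ≤ t → s τ - s t ≤ V₀ * (t - τ))
    (t x : ℝ) (ht : 0 < t) (hx : x < s t) :
    |∫ τ in (0:ℝ)..t,
        Real.exp (-γ * (t - τ)) *
          (Real.exp (-(x - s τ) ^ 2 / (4 * (t - τ))) / Real.sqrt (4 * Real.pi * (t - τ))) * V₀|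
      ≤ (V₀ / Real.sqrt (v₀ ^ 2 + 4 * γ)) *
          Real.exp (-(v₀ * |x - s t|) / 2 - |x - s t| ^ 2 / (4 * t)) := by
  have hr : 0 < v₀ ^ 2 / 4 + γ := by positivity
  set r := v₀ ^ 2 / 4 + γ with hrdef
  set d := |x - s t| with hd
  have hd' : d = s t - x := by rw [hd, abs_of_neg (by linarith)]; ring
  have hdpos : 0 < d := by linarith
  clear_value d
  set E := Real.exp (-(v₀ * d) / 2 - d ^ 2 / (4 * t)) with hE
  have hEpos : 0 < E := Real.exp_pos _
  set C := V₀ * E / (2 * Real.sqrt Real.pi) with hC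
  have hpi : 0 < Real.sqrt Real.pi := Real.sqrt_pos.mpr Real.pi_pos
  have hCpos : 0 < C := by positivity
  let h : ℝ → ℝ := fun u => C * (u ^ ((1:ℝ)/2 - 1) * Real.exp (-(r * u)))
  have hint : IntegrableOn h (Set.Ioi 0) := by
    have := integrableOn_rpow_mul_exp_neg_mul_rpow (p := 1) (s := (1:ℝ)/2 - 1) (b := r)
      (by norm_num) one_pos hr
    simp only [Real.rpow_one, neg_mul] at this
    exact this.const_mul C
  have hii : IntervalIntegrable h volume 0 t := by
    rw [intervalIntegrable_iff_integrableOn_Ioc_of_le ht.le]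
    exact hint.mono_set Set.Ioc_subset_Ioi_self
  have hgi : IntervalIntegrable (fun τ => h (t - τ)) volume 0 t := by
    have := (hii.comp_sub_left t).symm
    simpa using this
  have hle : ∀ᵐ τ ∂volume, τ ∈ Set.Ioc (0:ℝ) t →
      ‖Real.exp (-γ * (t - τ)) *
          (Real.exp (-(x - s τ) ^ 2 / (4 * (t - τ))) / Real.sqrt (4 * Real.pi * (t - τ))) * V₀‖
        ≤ h (t - τ) := by
    refine Filter.Eventually.of_forall fun τ hτ => ?_
    rw [Real.norm_of_nonneg (by positivity)]
    rcases hτ.2.eq_or_lt with rfl | hlt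
    · simp only [sub_self, mul_zero, Real.sqrt_zero, div_zero, zero_mul, h]
      positivity
    have hu : 0 < t - τ := by linarith
    have h1 := hs_lower τ t hτ.1.le hτ.2
    have hut : t - τ ≤ t := by linarith [hτ.1]
    have hsx : s τ = x + d + (s τ - s t) := by linarith
    generalize s τ - s t = w at h1 hsx
    rw [hsx]
    generalize t - τ = u at *
    have hsq : Real.sqrt (4 * Real.pi * u) = 2 * Real.sqrt Real.pi * Real.sqrt u := by
      rw [Real.sqrt_mul (by positivity), Real.sqrt_mul (by norm_num),
        show (4:ℝ) = 2 ^ 2 by norm_num, Real.sqrt_sq (by norm_num)]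
    have hrp : u ^ ((1:ℝ)/2 - 1) = 1 / Real.sqrt u := by
      rw [Real.sqrt_eq_rpow, one_div (u ^ _), ← Real.rpow_neg hu.le]; norm_num
    have hsu : 0 < Real.sqrt u := Real.sqrt_pos.mpr hu
    have key : Real.exp (-γ * u) * Real.exp (-(x - (x + d + w)) ^ 2 / (4 * u))
        ≤ E * Real.exp (-(r * u)) := by
      rw [hE, ← Real.exp_add, ← Real.exp_add, Real.exp_le_exp]
      have e1 : (d + v₀ * u) ^ 2 / (4 * u) ≤ (d + w) ^ 2 / (4 * u) := by
        gcongr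
      have e2 : (d + v₀ * u) ^ 2 / (4 * u) = d ^ 2 / (4 * u) + v₀ * d / 2 + v₀ ^ 2 / 4 * u := by
        field_simp; ring
      have e3 : d ^ 2 / (4 * t) ≤ d ^ 2 / (4 * u) := by gcongr
      have e4 : -(x - (x + d + w)) ^ 2 / (4 * u) = -((d + w) ^ 2 / (4 * u)) := by ring
      rw [e4, hrdef]
      linarith
    simp only [h, hC]
    rw [hsq, hrp]
    calc _ = (Real.exp (-γ * u) * Real.exp (-(x - (x + d + w)) ^ 2 / (4 * u))) *
          (V₀ / (2 * Real.sqrt Real.pi * Real.sqrt u)) := by ring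
      _ ≤ (E * Real.exp (-(r * u))) * (V₀ / (2 * Real.sqrt Real.pi * Real.sqrt u)) := by gcongr
      _ = _ := by field_simp
  have hmain := intervalIntegral.norm_integral_le_of_norm_le ht.le hle hgi
  rw [Real.norm_eq_abs] at hmain
  refine hmain.trans ?_
  rw [intervalIntegral.integral_comp_sub_left h t, sub_self, sub_zero,
    intervalIntegral.integral_of_le ht.le]
  refine (setIntegral_mono_set hint ?_ Set.Ioc_subset_Ioi_self.eventuallyLE).trans ?_
  · refine (ae_restrict_iff' measurableSet_Ioi).mpr (Filter.Eventually.of_forall fun u hu => ?_)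
    have hu' : (0:ℝ) < u := hu
    simp only [h, Pi.zero_apply]
    positivity
  · simp only [h]
    rw [integral_const_mul, Real.integral_rpow_mul_exp_neg_mul_Ioi (by norm_num) hr,
      Real.Gamma_one_half_eq, ← Real.sqrt_eq_rpow, Real.sqrt_div zero_le_one, Real.sqrt_one,
      show v₀ ^ 2 + 4 * γ = 2 ^ 2 * r by rw [hrdef]; ring, Real.sqrt_mul (by norm_num),
      Real.sqrt_sq (by norm_num), hC]
    have : 0 < Real.sqrt r := Real.sqrt_pos.mpr hr
    apply le_of_eq
    field_simp
end

section
/- Let v₀ > 0, V₀ > 0, and let s : [0,∞) → ℝ satisfy v₀(t−τ) ≤ s(τ) − s(t) ≤ V₀(t−τ) for 0 ≤ τ ≤ t. Fix t > 0 and x with s(t) − 1 ≤ x ≤ s(t). Then ∫_0^t (|x−s(τ)|/(2(t−τ))) · exp(−(x−s(τ))²/(4(t−τ)))/(2√(π(t−τ))) · V₀ dτ ≤ (V₀/2)·(1 + V₀/v₀). -/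
open Real MeasureTheory

lemma aux_cov (t : ℝ) (f f' : ℝ → ℝ) (hf : ∀ τ ∈ Set.Ioo 0 t, HasDerivAt f (f' τ) τ)
    (hinj : Set.InjOn f (Set.Ioo 0 t)) (hpos : ∀ τ ∈ Set.Ioo 0 t, 0 < f τ) :
    IntegrableOn (fun τ => |f' τ| * Real.exp (-(f τ) ^ 2)) (Set.Ioo 0 t) ∧
    ∫ τ in Set.Ioo 0 t, |f' τ| * Real.exp (-(f τ) ^ 2) ≤ √π / 2 := by
  have hG : Integrable (fun y : ℝ => Real.exp (-y ^ 2)) := by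
    simpa using integrable_exp_neg_mul_sq (b := 1) one_pos
  have hI : ∫ y in Set.Ioi (0:ℝ), Real.exp (-y ^ 2) = √π / 2 := by
    simpa using integral_gaussian_Ioi 1
  have hd : ∀ τ ∈ Set.Ioo 0 t, HasDerivWithinAt f (f' τ) (Set.Ioo 0 t) τ :=
    fun τ h => (hf τ h).hasDerivWithinAt
  have h1 := integrableOn_image_iff_integrableOn_abs_deriv_smul measurableSet_Ioo hd hinj
    (fun y : ℝ => Real.exp (-y ^ 2))
  have h2 := integral_image_eq_integral_abs_deriv_smul measurableSet_Ioo hd hinj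
    (fun y : ℝ => Real.exp (-y ^ 2))
  simp only [smul_eq_mul] at h1 h2
  refine ⟨h1.1 hG.integrableOn, ?_⟩
  rw [← h2, ← hI]
  refine setIntegral_mono_set hG.integrableOn (Filter.Eventually.of_forall fun y => (Real.exp_pos _).le) ?_
  refine HasSubset.Subset.eventuallyLE ?_
  rintro _ ⟨τ, h, rfl⟩
  exact hpos τ h

lemma aux_sqrt (t τ : ℝ) (h : τ < t) :
    HasDerivAt (fun τ => √(t - τ)) (-(1 / (2 * √(t - τ)))) τ := by
  have := ((hasDerivAt_id τ).const_sub t).sqrt (by simp; linarith)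
  refine HasDerivAt.congr_deriv this ?_
  simp only [id]; ring

lemma aux_first (t a : ℝ) (ha : 0 ≤ a) :
    IntegrableOn (fun τ => a / (4 * (t - τ) * √(t - τ)) * Real.exp (-a ^ 2 / (4 * (t - τ))))
      (Set.Ioo 0 t) ∧
    ∫ τ in Set.Ioo 0 t, a / (4 * (t - τ) * √(t - τ)) * Real.exp (-a ^ 2 / (4 * (t - τ)))
      ≤ √π / 2 := by
  rcases ha.eq_or_lt with rfl | ha
  · simp; positivity
  have key := aux_cov t (fun τ => a / (2 * √(t - τ))) (fun τ => a / (4 * (t - τ) * √(t - τ)))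
    ?_ ?_ ?_
  · have he : Set.EqOn (fun τ => |a / (4 * (t - τ) * √(t - τ))| * Real.exp (-(a / (2 * √(t - τ))) ^ 2))
      (fun τ => a / (4 * (t - τ) * √(t - τ)) * Real.exp (-a ^ 2 / (4 * (t - τ)))) (Set.Ioo 0 t) := by
      intro τ h
      have hu : 0 < t - τ := sub_pos.2 h.2
      dsimp only
      rw [abs_of_nonneg (by positivity), div_pow, mul_pow, Real.sq_sqrt hu.le]
      congr 2
      ring
    rw [← setIntegral_congr_fun measurableSet_Ioo he]
    exact ⟨key.1.congr_fun he measurableSet_Ioo, key.2⟩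
  · intro τ h
    have hu : 0 < t - τ := sub_pos.2 h.2
    have hs := Real.sqrt_pos.2 hu
    have := (hasDerivAt_const τ a).fun_div ((aux_sqrt t τ h.2).const_mul 2) (by positivity)
    refine HasDerivAt.congr_deriv this ?_
    have h2 : t - τ = √(t - τ) ^ 2 := (Real.sq_sqrt hu.le).symm
    generalize √(t - τ) = r at *
    rw [h2]
    field_simp
    ring
  · intro τ h σ h' e
    have hu : 0 < t - τ := sub_pos.2 h.2
    have hu' : 0 < t - σ := sub_pos.2 h'.2
    have hs := Real.sqrt_pos.2 hu
    have hs' := Real.sqrt_pos.2 hu'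
    dsimp only at e
    have e2 : √(t - τ) = √(t - σ) := by
      field_simp at e
      linarith
    have := (Real.sqrt_inj hu.le hu'.le).1 e2
    linarith
  · intro τ h
    have hu : 0 < t - τ := sub_pos.2 h.2
    positivity

lemma aux_second (t v : ℝ) (hv : 0 < v) :
    IntegrableOn (fun τ => v / (4 * √(t - τ)) * Real.exp (-v ^ 2 * (t - τ) / 4))
      (Set.Ioo 0 t) ∧
    ∫ τ in Set.Ioo 0 t, v / (4 * √(t - τ)) * Real.exp (-v ^ 2 * (t - τ) / 4)
      ≤ √π / 2 := by
  have key := aux_cov t (fun τ => v / 2 * √(t - τ)) (fun τ => -(v / (4 * √(t - τ))))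
    ?_ ?_ ?_
  · have he : Set.EqOn (fun τ => |-(v / (4 * √(t - τ)))| * Real.exp (-(v / 2 * √(t - τ)) ^ 2))
      (fun τ => v / (4 * √(t - τ)) * Real.exp (-v ^ 2 * (t - τ) / 4)) (Set.Ioo 0 t) := by
      intro τ h
      have hu : 0 < t - τ := sub_pos.2 h.2
      dsimp only
      rw [abs_neg, abs_of_nonneg (by positivity), mul_pow, Real.sq_sqrt hu.le]
      congr 2
      ring
    rw [← setIntegral_congr_fun measurableSet_Ioo he]
    exact ⟨key.1.congr_fun he measurableSet_Ioo, key.2⟩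
  · intro τ h
    have := (aux_sqrt t τ h.2).const_mul (v / 2)
    refine HasDerivAt.congr_deriv this ?_
    ring
  · intro τ h σ h' e
    have hu : 0 < t - τ := sub_pos.2 h.2
    have hu' : 0 < t - σ := sub_pos.2 h'.2
    dsimp only at e
    have e2 : √(t - τ) = √(t - σ) := mul_left_cancel₀ (by positivity) e
    have := (Real.sqrt_inj hu.le hu'.le).1 e2
    linarith
  · intro τ h
    have hu : 0 < t - τ := sub_pos.2 h.2
    positivity

theorem derivative_near_front_bound (v₀ V₀ : ℝ) (hv₀ : 0 < v₀) (hV₀ : 0 < V₀)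
    (s : ℝ → ℝ)
    (hs : ∀ τ t : ℝ, 0 ≤ τ → τ ≤ t →
      v₀ * (t - τ) ≤ s τ - s t ∧ s τ - s t ≤ V₀ * (t - τ))
    (t x : ℝ) (ht : 0 < t) (hx₁ : s t - 1 ≤ x) (hx₂ : x ≤ s t) :
    ∫ τ in (0:ℝ)..t,
        (|x - s τ| / (2 * (t - τ))) *
          (Real.exp (-(x - s τ) ^ 2 / (4 * (t - τ))) / (2 * Real.sqrt (Real.pi * (t - τ)))) * V₀
      ≤ (V₀ / 2) * (1 + V₀ / v₀) := by
  rw [intervalIntegral.integral_of_le ht.le, integral_Ioc_eq_integral_Ioo]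
  obtain ⟨i1, b1⟩ := aux_first t (s t - x) (by linarith)
  obtain ⟨i2, b2⟩ := aux_second t v₀ hv₀
  have hp : 0 < √π := Real.sqrt_pos.2 Real.pi_pos
  have hle := integral_mono_of_nonneg (μ := volume.restrict (Set.Ioo 0 t)) (f := fun τ =>
      (|x - s τ| / (2 * (t - τ))) *
          (Real.exp (-(x - s τ) ^ 2 / (4 * (t - τ))) / (2 * Real.sqrt (Real.pi * (t - τ)))) * V₀)
      ?_ ((i1.const_mul (V₀ / √π)).add (i2.const_mul (V₀ / √π * (V₀ / v₀)))) ?_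
  · refine hle.trans ?_
    simp only [Pi.add_apply]
    rw [integral_add (i1.const_mul _) (i2.const_mul _), integral_const_mul, integral_const_mul]
    have h1 := mul_le_mul_of_nonneg_left b1 (show 0 ≤ V₀ / √π by positivity)
    have h2 := mul_le_mul_of_nonneg_left b2 (show 0 ≤ V₀ / √π * (V₀ / v₀) by positivity)
    refine (add_le_add h1 h2).trans (le_of_eq ?_)
    field_simp
  · refine (ae_restrict_iff' measurableSet_Ioo).2 (Filter.Eventually.of_forall fun τ h => ?_)
    have hu : 0 < t - τ := sub_pos.2 h.2
    dsimp only [Pi.zero_apply]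
    positivity
  · refine (ae_restrict_iff' measurableSet_Ioo).2 (Filter.Eventually.of_forall fun τ h => ?_)
    have hu : 0 < t - τ := sub_pos.2 h.2
    obtain ⟨l, r⟩ := hs τ t h.1.le h.2.le
    have hvu : 0 < v₀ * (t - τ) := by positivity
    simp only [Pi.add_apply]
    have hr : 0 < √(t - τ) := Real.sqrt_pos.2 hu
    have e1 : Real.exp (-(x - s τ) ^ 2 / (4 * (t - τ))) ≤
        Real.exp (-(s t - x) ^ 2 / (4 * (t - τ))) := by
      apply Real.exp_le_exp.2
      gcongr ?_ / _
      nlinarith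
    have e2 : Real.exp (-(x - s τ) ^ 2 / (4 * (t - τ))) ≤
        Real.exp (-v₀ ^ 2 * (t - τ) / 4) := by
      apply Real.exp_le_exp.2
      rw [div_le_iff₀ (by positivity)]
      have : (v₀ * (t - τ)) ^ 2 ≤ (x - s τ) ^ 2 := by
        rw [← neg_sq (x - s τ)]
        exact pow_le_pow_left₀ hvu.le (by linarith) 2
      nlinarith
    have habs : |x - s τ| ≤ (s t - x) + V₀ * (t - τ) := by
      rw [abs_of_nonpos (by linarith)]; linarith
    rw [Real.sqrt_mul Real.pi_pos.le]
    set X := Real.exp (-(x - s τ) ^ 2 / (4 * (t - τ)))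
    have hX : 0 ≤ X := (Real.exp_pos _).le
    have ha : 0 ≤ s t - x := by linarith
    calc |x - s τ| / (2 * (t - τ)) * (X / (2 * (√π * √(t - τ)))) * V₀
        ≤ ((s t - x) + V₀ * (t - τ)) / (2 * (t - τ)) * (X / (2 * (√π * √(t - τ)))) * V₀ := by
          gcongr
      _ = V₀ / √π * ((s t - x) / (4 * (t - τ) * √(t - τ)) * X) +
          V₀ / √π * (V₀ / v₀) * (v₀ / (4 * √(t - τ)) * X) := by
          field_simp
          ring
      _ ≤ _ := by gcongr
end
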